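/- The braid order: for β₁, β₂ ∈ B_∞, define β₁ < β₂ to mean that β₁⁻¹β₂ is σ_i-positive for some i ≥ 1, i.e., β₁⁻¹β₂ = sh^{i−1}(γ) for some i ≥ 1 and some σ₁-positive braid γ. Then < is a strict linear order on B_∞ (irreflexive, transitive, and for all β₁ ≠ β₂ either β₁ < β₂ or β₂ < β₁), and it is compatible with multiplication on the left: β₁ < β₂ implies γβ₁ < γβ₂ for every γ ∈ B_∞. -/

import Mathlib

/-- The braid relations on generators indexed by `ℕ` (generator `i` stands for
the Artin generator `σ_{i+1}` of the paper). -/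
def braidRels : Set (FreeGroup ℕ) :=
  {r | (∃ i j : ℕ, i + 2 ≤ j ∧
          r = .of i * .of j * (.of i)⁻¹ * (.of j)⁻¹) ∨
       (∃ i : ℕ,
          r = .of i * .of (i + 1) * .of i *
              (.of (i + 1) * .of i * .of (i + 1))⁻¹)}

/-- The braid group on infinitely many strands. -/
abbrev Binf : Type := PresentedGroup braidRels

/-- `σ i` is the Artin generator `σ_{i+1}` of the paper (0-indexed). -/
def σ (i : ℕ) : Binf := PresentedGroup.of i

lemma mk_rel_eq_one {r : FreeGroup ℕ} (h : r ∈ braidRels) :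
    PresentedGroup.mk braidRels r = 1 :=
  (QuotientGroup.eq_one_iff r).mpr (Subgroup.subset_normalClosure h)

lemma shift_lift_eq_one :
    ∀ r ∈ braidRels, FreeGroup.lift (fun n => σ (n + 1)) r = 1 := by
  intro r hr
  have key : ∀ s ∈ braidRels, FreeGroup.lift (fun n => σ (n + 1)) s
      = PresentedGroup.mk braidRels (FreeGroup.map (· + 1) s) := by
    intro s _
    have : (FreeGroup.lift (fun n => σ (n + 1)) : FreeGroup ℕ →* Binf)
        = (PresentedGroup.mk braidRels).comp (FreeGroup.map (· + 1)) := by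
      apply FreeGroup.ext_hom
      intro x
      simp [σ, PresentedGroup.of]
    rw [this]; rfl
  rw [key r hr]
  apply mk_rel_eq_one
  rcases hr with ⟨i, j, hij, rfl⟩ | ⟨i, rfl⟩
  · exact Or.inl ⟨i + 1, j + 1, by omega, by simp⟩
  · exact Or.inr ⟨i + 1, by simp⟩

/-- The shift endomorphism of the braid group, mapping `σ i` to `σ (i+1)`. -/
def sh : Binf →* Binf := PresentedGroup.toGroup shift_lift_eq_one

@[simp] lemma sh_σ (i : ℕ) : sh (σ i) = σ (i + 1) :=
  PresentedGroup.toGroup.of shift_lift_eq_one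

/-- The shifted-conjugation (selfdistributive) operation on `Binf`:
`β₁ ▷ β₂ = β₁ · sh β₂ · σ₁ · (sh β₁)⁻¹`. -/
def sc (β₁ β₂ : Binf) : Binf := β₁ * sh β₂ * σ 0 * (sh β₁)⁻¹

/-- A braid is `σ₁`-positive if it can be written
`sh γ₀ · σ₁ · sh γ₁ · σ₁ ⋯ σ₁ · sh γₙ` with `n ≥ 1` factors `σ₁`
(recall that `σ 0` is the paper's `σ₁`). -/
def sigma1Pos (β : Binf) : Prop :=
  ∃ (l : List Binf) (γ : Binf), l ≠ [] ∧
    β = (l.map (fun g => sh g * σ 0)).prod * sh γ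

/-- The braid order: `blt β₁ β₂` holds when `β₁⁻¹ β₂` is `σ_i`-positive for
some `i ≥ 1`, i.e. `β₁⁻¹ β₂ = sh^{i-1} γ` for some `σ₁`-positive `γ`. -/
def blt (β₁ β₂ : Binf) : Prop :=
  ∃ (k : ℕ) (γ : Binf), sigma1Pos γ ∧ β₁⁻¹ * β₂ = (⇑sh)^[k] γ

/-!
Comparability (Dehornoy). The operation `sc` is left self-distributive. In the free left
self-distributive system on one generator, confluence of left-to-right distribution, together with
the fact that every term acts on a large enough right power of the generator just as the generator
does, shows that any two elements are equal or one is an iterated left factor of the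
other. Since `a⁻¹ * sc a b` is σ₁-positive, any two *special* braids, those generated by `1` under
`sc`, are comparable. Positive braids are products of shifted special braids, and every braid is a
quotient of positive braids because full twists clear denominators; so every braid is comparable
with `1`.

Irreflexivity (Larue). Under Artin's representation on the free group, the generators `σ i` with
`i > k` fix the set of reduced words beginning with the letter `k`, while `σ k` maps it strictly
into itself; hence so does every `k`-fold shift of a σ₁-positive braid, which is therefore not `1`.
-/

section Rewriting

open Relation

variable {α : Type*} {r : α → α → Prop} {f : α → α}

/-- A rewriting relation `r` has the *Z property* for `f` if every one-step reduct of `a` reduces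
to `f a`, and `f` is monotone for reduction. This is Dehornoy and van Oostrom's criterion for
confluence. -/
structure ZProperty (r : α → α → Prop) (f : α → α) : Prop where
  reduces_apply {a b : α} : r a b → ReflTransGen r b (f a)
  apply_reduces {a b : α} : r a b → ReflTransGen r (f a) (f b)

namespace ZProperty

lemma apply_mono (hf : ZProperty r f) {a b : α} (hab : ReflTransGen r a b) :
    ReflTransGen r (f a) (f b) :=
  hab.lift' f fun _ _ => hf.apply_reduces

theorem confluent (hf : ZProperty r f) {a b c : α} (hab : ReflTransGen r a b)
    (hac : ReflTransGen r a c) : Join (ReflTransGen r) b c := by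
  induction hac with
  | refl => exact ⟨b, .refl, hab⟩
  | @tail c c' _ hcc' ih =>
    obtain ⟨d, hbd, hcd⟩ := ih
    rcases hcd.cases_tail with rfl | ⟨e, hce, hed⟩
    · exact ⟨c', hbd.tail hcc', .refl⟩
    · exact ⟨f e, hbd.trans (hf.reduces_apply hed),
        (hf.reduces_apply hcc').trans (hf.apply_mono hce)⟩

theorem join_of_eqvGen (hf : ZProperty r f) {a b : α} (hab : EqvGen r a b) :
    Join (ReflTransGen r) a b := by
  have join_equivalence : Equivalence (Join (ReflTransGen r)) :=
    equivalence_join fun _ _ _ => hf.confluent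
  exact join_equivalence.eqvGen_iff.mp (hab.mono fun _ b hab => ⟨b, .single hab, .refl⟩)

end ZProperty

end Rewriting

section RightPowers

open Filter
open scoped Quandles

variable {S : Type*} [Shelf S]

/-- The right power `a ◃ (a ◃ ⋯ (a ◃ a))`, in which the operation occurs `n` times. -/
def rightPow (a : S) (n : ℕ) : S := (a ◃ ·)^[n] a

lemma act_rightPow (a : S) (n : ℕ) : a ◃ rightPow a n = rightPow a (n + 1) :=
  (Function.iterate_succ_apply' _ _ _).symm

lemma eventually_act_rightPow_of_act {a b c : S}
    (hb : ∀ᶠ n in atTop, b ◃ rightPow a n = rightPow a (n + 1))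
    (hc : ∀ᶠ n in atTop, c ◃ rightPow a n = rightPow a (n + 1)) :
    ∀ᶠ n in atTop, (b ◃ c) ◃ rightPow a n = rightPow a (n + 1) := by
  rw [← map_add_atTop_eq_nat 1, eventually_map]
  filter_upwards [hb, hc, (tendsto_add_atTop_nat 1).eventually hb] with n hbn hcn hbn'
  calc
    (b ◃ c) ◃ rightPow a (n + 1) = (b ◃ c) ◃ (b ◃ rightPow a n) := by rw [hbn]
    _ = b ◃ (c ◃ rightPow a n) := Shelf.self_distrib.symm
    _ = rightPow a (n + 1 + 1) := by rw [hcn, hbn']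

end RightPowers

/-- Terms in one variable `x` and one binary operation `⋆`. -/
inductive LDTerm : Type
  | x : LDTerm
  | op : LDTerm → LDTerm → LDTerm

namespace LDTerm

open Filter Relation
open scoped Quandles

local infixr:70 " ⋆ " => LDTerm.op

/-- One application, at any position in a term, of the left self-distributivity law, read as a
rewriting rule from left to right. -/
inductive Step : LDTerm → LDTerm → Prop
  | distrib (a b c : LDTerm) : Step (a ⋆ b ⋆ c) ((a ⋆ b) ⋆ a ⋆ c)
  | left {a a' : LDTerm} (b : LDTerm) : Step a a' → Step (a ⋆ b) (a' ⋆ b)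
  | right (a : LDTerm) {b b' : LDTerm} : Step b b' → Step (a ⋆ b) (a ⋆ b')

/-- `Expands t t'` says that `t'` is obtained from `t` by finitely many left-to-right applications
of self-distributivity (an LD-expansion). -/
abbrev Expands : LDTerm → LDTerm → Prop := ReflTransGen Step

lemma Expands.op {a a' b b' : LDTerm} (ha : Expands a a') (hb : Expands b b') :
    Expands (a ⋆ b) (a' ⋆ b') :=
  (ha.lift (· ⋆ b) fun _ _ => Step.left b).trans (hb.lift (a' ⋆ ·) fun _ _ => Step.right a')

lemma Expands.distrib (a b c : LDTerm) : Expands (a ⋆ b ⋆ c) ((a ⋆ b) ⋆ a ⋆ c) :=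
  .single (.distrib a b c)

/-- The term `t ⋆ s` with `t` distributed down to the leaves of `s`. -/
def distribute (t : LDTerm) : LDTerm → LDTerm
  | x => t ⋆ x
  | a ⋆ b => distribute t a ⋆ distribute t b

/-- Dehornoy's fundamental expansion of a term, written `∂t` in the literature. It is a common
expansion of all one-step expansions of `t`. -/
def fundamental : LDTerm → LDTerm
  | x => x
  | a ⋆ b => distribute (fundamental a) (fundamental b)

lemma expands_distribute (t s : LDTerm) : Expands (t ⋆ s) (distribute t s) := by
  induction s with
  | x => exact .refl
  | op a b iha ihb => exact (Expands.distrib t a b).trans (iha.op ihb)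

lemma expands_distribute_left {t t' : LDTerm} (h : Expands t t') (s : LDTerm) :
    Expands (distribute t s) (distribute t' s) := by
  induction s with
  | x => exact h.op .refl
  | op a b iha ihb => exact iha.op ihb

lemma step_distribute_right (t : LDTerm) {s s' : LDTerm} (h : Step s s') :
    Step (distribute t s) (distribute t s') := by
  induction h with
  | distrib a b c => exact .distrib _ _ _
  | left b _ ih => exact .left _ ih
  | right a _ ih => exact .right _ ih

lemma expands_distribute_right (t : LDTerm) {s s' : LDTerm} (h : Expands s s') :
    Expands (distribute t s) (distribute t s') :=
  h.lift (distribute t) fun _ _ => step_distribute_right t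

lemma expands_distribute_distribute (t s r : LDTerm) :
    Expands (distribute t (distribute s r)) (distribute (distribute t s) (distribute t r)) := by
  induction r with
  | x =>
    exact (Expands.distrib (distribute t s) t x).trans
      (Expands.op (expands_distribute (distribute t s) t) .refl)
  | op a b iha ihb => exact iha.op ihb

lemma op_op_expands_distribute (a b c : LDTerm) :
    Expands ((a ⋆ b) ⋆ a ⋆ c) (distribute a (distribute b c)) := by
  induction c with
  | x => exact (expands_distribute a b).op .refl
  | op c d ihc ihd =>
    calc
      Expands ((a ⋆ b) ⋆ a ⋆ c ⋆ d) ((a ⋆ b) ⋆ (a ⋆ c) ⋆ a ⋆ d) :=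
        Expands.op .refl (.distrib a c d)
      Expands _ (((a ⋆ b) ⋆ a ⋆ c) ⋆ (a ⋆ b) ⋆ a ⋆ d) := .distrib _ _ _
      Expands _ (distribute a (distribute b (c ⋆ d))) := ihc.op ihd

lemma expands_fundamental (t : LDTerm) : Expands t (fundamental t) := by
  induction t with
  | x => exact .refl
  | op a b iha ihb => exact (iha.op ihb).trans (expands_distribute _ _)

theorem zProperty_fundamental : ZProperty Step fundamental where
  reduces_apply h := by
    induction h with
    | distrib a b c =>
      have expands_abc := (expands_fundamental a).op (expands_fundamental b) |>.op
        ((expands_fundamental a).op (expands_fundamental c))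
      exact expands_abc.trans (op_op_expands_distribute _ _ _)
    | left b _ ih => exact (Expands.op ih (expands_fundamental b)).trans (expands_distribute _ _)
    | right a _ ih => exact ((expands_fundamental a).op ih).trans (expands_distribute _ _)
  apply_reduces h := by
    induction h with
    | distrib a b c => exact expands_distribute_distribute _ _ _
    | left b _ ih => exact expands_distribute_left ih _
    | right a _ ih => exact expands_distribute_right _ ih

/-- The free left self-distributive system on one generator. -/
abbrev FreeLD : Type := Quot Step

instance : Shelf FreeLD where
  act := Quot.map₂ LDTerm.op (fun a _ _ => Step.right a) fun _ _ b => Step.left b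
  self_distrib := by
    rintro ⟨a⟩ ⟨b⟩ ⟨c⟩
    exact Quot.sound (.distrib a b c)

lemma eventually_mk_act_rightPow (t : LDTerm) :
    ∀ᶠ n in atTop, (Quot.mk Step t : FreeLD) ◃ rightPow (Quot.mk Step x) n =
      rightPow (Quot.mk Step x) (n + 1) := by
  induction t with
  | x => exact .of_forall (act_rightPow _)
  | op b c ihb ihc => exact eventually_act_rightPow_of_act ihb ihc

/-- `LeftFactor t a` says that `t = a ⋆ b` for some `b`. Its reflexive-transitive closure relates a
term to the subterms on its left spine. -/
def LeftFactor (t a : LDTerm) : Prop := ∃ b, t = a ⋆ b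

/-- `OnLeftSpine t u` says that `u` is an iterated left factor of `t`. -/
abbrev OnLeftSpine : LDTerm → LDTerm → Prop := ReflTransGen LeftFactor

lemma leftFactor_rightUnique : Relator.RightUnique LeftFactor := by
  rintro _ a a' ⟨b, rfl⟩ ⟨b', h⟩
  cases h
  rfl

lemma OnLeftSpine.exists_of_step {t t' u : LDTerm} (hu : OnLeftSpine t u) (ht : Step t t') :
    ∃ u', OnLeftSpine t' u' ∧ Expands u u' := by
  induction hu using ReflTransGen.head_induction_on generalizing t' with
  | refl => exact ⟨t', .refl, .single ht⟩
  | head hta hau ih =>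
    obtain ⟨b, rfl⟩ := hta
    cases ht with
    | distrib _ b c => exact ⟨u, .head ⟨_, rfl⟩ (.head ⟨_, rfl⟩ hau), .refl⟩
    | left _ ha =>
      obtain ⟨u', hu', huu'⟩ := ih ha
      exact ⟨u', .head ⟨_, rfl⟩ hu', huu'⟩
    | right _ _ => exact ⟨u, .head ⟨_, rfl⟩ hau, .refl⟩

lemma OnLeftSpine.exists_of_expands {t t' u : LDTerm} (hu : OnLeftSpine t u) (ht : Expands t t') :
    ∃ u', OnLeftSpine t' u' ∧ Expands u u' := by
  induction ht with
  | refl => exact ⟨u, hu, .refl⟩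
  | tail _ hstep ih =>
    obtain ⟨v, hv, huv⟩ := ih
    obtain ⟨w, hw, hvw⟩ := hv.exists_of_step hstep
    exact ⟨w, hw, huv.trans hvw⟩

/-- For large `n` both `s` and `t` absorb into the same right power `x ⋆ (x ⋆ ⋯)`, which therefore
has a common expansion with `s ⋆ p` and `t ⋆ p`; expansions of `s` and `t` lie on its left spine. -/
theorem exists_expands_onLeftSpine (s t : LDTerm) :
    ∃ u v, Expands s u ∧ Expands t v ∧ (OnLeftSpine u v ∨ OnLeftSpine v u) := by
  obtain ⟨n, hs, ht⟩ :=
    ((eventually_mk_act_rightPow s).and (eventually_mk_act_rightPow t)).exists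
  obtain ⟨p, hp⟩ := Quot.exists_rep (rightPow (Quot.mk Step x : FreeLD) n)
  have mk_eq : Quot.mk Step (s ⋆ p) = Quot.mk Step (t ⋆ p) := by
    rw [← hp] at hs ht
    exact hs.trans ht.symm
  obtain ⟨r, hsr, htr⟩ := zProperty_fundamental.join_of_eqvGen (Quot.eqvGen_exact mk_eq)
  obtain ⟨u, hru, hsu⟩ := OnLeftSpine.exists_of_expands (.single ⟨p, rfl⟩) hsr
  obtain ⟨v, hrv, htv⟩ := OnLeftSpine.exists_of_expands (.single ⟨p, rfl⟩) htr
  exact ⟨u, v, hsu, htv, hru.total_of_right_unique leftFactor_rightUnique hrv⟩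

/-- The value of a term in a shelf, the variable standing for `a`. -/
def eval {S : Type*} [Shelf S] (a : S) : LDTerm → S
  | x => a
  | s ⋆ t => eval a s ◃ eval a t

lemma eval_eq_of_step {S : Type*} [Shelf S] (a : S) {s t : LDTerm} (h : Step s t) :
    eval a s = eval a t := by
  induction h with
  | distrib b c d => exact Shelf.self_distrib
  | left b _ ih => simp only [eval, ih]
  | right b _ ih => simp only [eval, ih]

lemma eval_eq_of_expands {S : Type*} [Shelf S] (a : S) {s t : LDTerm} (h : Expands s t) :
    eval a s = eval a t := by
  induction h with
  | refl => rfl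
  | tail _ hstep ih => exact ih.trans (eval_eq_of_step a hstep)

end LDTerm

section Generators

lemma σ_commute {i j : ℕ} (h : i + 2 ≤ j) : Commute (σ i) (σ j) := by
  have relator_eq_one : σ i * σ j * (σ i)⁻¹ * (σ j)⁻¹ = 1 := mk_rel_eq_one (.inl ⟨i, j, h, rfl⟩)
  exact mul_inv_eq_iff_eq_mul.mp (mul_inv_eq_one.mp relator_eq_one)

lemma σ_braid (i : ℕ) : σ i * σ (i + 1) * σ i = σ (i + 1) * σ i * σ (i + 1) :=
  mul_inv_eq_one.mp (mk_rel_eq_one (.inr ⟨i, rfl⟩))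

lemma closure_range_σ : Subgroup.closure (Set.range σ) = ⊤ :=
  PresentedGroup.closure_range_of braidRels

lemma iterate_sh_σ (n i : ℕ) : sh^[n] (σ i) = σ (i + n) := by
  induction n with
  | zero => rfl
  | succ n ih => rw [Function.iterate_succ_apply', ih, sh_σ, add_assoc]

lemma σ_zero_commute_sh_sh (g : Binf) : Commute (σ 0) (sh (sh g)) := by
  have hg : g ∈ Subgroup.closure (Set.range σ) := closure_range_σ ▸ Subgroup.mem_top g
  induction hg using Subgroup.closure_induction with
  | mem _ hσ =>
    obtain ⟨i, rfl⟩ := hσ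
    simpa only [sh_σ] using σ_commute (by lia)
  | one => simp only [map_one, Commute.one_right]
  | mul a b _ _ iha ihb => simpa only [map_mul] using iha.mul_right ihb
  | inv a _ iha => simpa only [map_inv] using iha.inv_right

theorem sc_sc (a b c : Binf) : sc a (sc b c) = sc (sc a b) (sc a c) := by
  have braid : σ 0 * σ 1 * σ 0 * (σ 1)⁻¹ = σ 1 * σ 0 := by
    rw [σ_braid 0, zero_add, mul_inv_cancel_right]
  symm
  calc
    sc (sc a b) (sc a c)
        = a * sh b * σ 0 * (sh (sh c) * σ 1 * (sh (sh a))⁻¹) * σ 0 *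
            (sh (sh a) * (σ 1)⁻¹ * (sh (sh b))⁻¹ * (sh a)⁻¹) := by
      simp only [sc, map_mul, map_inv, sh_σ]
      group
    _ = a * sh b * (σ 0 * sh (sh c)) * σ 1 * ((sh (sh a))⁻¹ * σ 0) * sh (sh a) * (σ 1)⁻¹ *
          (sh (sh b))⁻¹ * (sh a)⁻¹ := by group
    _ = a * sh b * (sh (sh c) * σ 0) * σ 1 * (σ 0 * (sh (sh a))⁻¹) * sh (sh a) * (σ 1)⁻¹ *
          (sh (sh b))⁻¹ * (sh a)⁻¹ := by
      rw [(σ_zero_commute_sh_sh c).eq, (σ_zero_commute_sh_sh a).inv_right.eq]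
    _ = a * sh b * sh (sh c) * (σ 0 * σ 1 * σ 0 * (σ 1)⁻¹) * (sh (sh b))⁻¹ * (sh a)⁻¹ := by group
    _ = a * sh b * sh (sh c) * σ 1 * (σ 0 * (sh (sh b))⁻¹) * (sh a)⁻¹ := by rw [braid]; group
    _ = a * sh b * sh (sh c) * σ 1 * ((sh (sh b))⁻¹ * σ 0) * (sh a)⁻¹ := by
      rw [(σ_zero_commute_sh_sh b).inv_right.eq]
    _ = sc a (sc b c) := by
      simp only [sc, map_mul, map_inv, sh_σ]
      group

instance : Shelf Binf where
  act := sc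
  self_distrib := sc_sc _ _ _

end Generators

section Positivity

lemma sigma1Pos.mul {a b : Binf} (ha : sigma1Pos a) (hb : sigma1Pos b) : sigma1Pos (a * b) := by
  obtain ⟨l, g, _, rfl⟩ := ha
  obtain ⟨_ | ⟨c, l'⟩, g', hl', rfl⟩ := hb
  · exact absurd rfl hl'
  · refine ⟨l ++ (g * c) :: l', g', by simp, ?_⟩
    simp only [List.map_append, List.map_cons, List.prod_append, List.prod_cons, map_mul, mul_assoc]

lemma sigma1Pos.mul_sh {a : Binf} (ha : sigma1Pos a) (b : Binf) : sigma1Pos (a * sh b) := by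
  obtain ⟨l, g, hl, rfl⟩ := ha
  exact ⟨l, g * b, hl, by rw [map_mul, mul_assoc]⟩

lemma sigma1Pos.sh_mul {a : Binf} (ha : sigma1Pos a) (b : Binf) : sigma1Pos (sh b * a) := by
  obtain ⟨_ | ⟨c, l⟩, g, hl, rfl⟩ := ha
  · exact absurd rfl hl
  · refine ⟨(b * c) :: l, g, by simp, ?_⟩
    simp only [List.map_cons, List.prod_cons, map_mul, mul_assoc]

@[elab_as_elim]
lemma sigma1Pos.induction_on {P : Binf → Prop} {β : Binf} (hβ : sigma1Pos β)
    (base : ∀ g h, P (sh g * σ 0 * sh h)) (mul : ∀ a b, P a → P b → P (a * b)) : P β := by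
  obtain ⟨l, γ, hl, rfl⟩ := hβ
  induction l with
  | nil => exact absurd rfl hl
  | cons g l ih =>
    rw [List.map_cons, List.prod_cons]
    rcases eq_or_ne l [] with rfl | hl'
    · simpa using base g γ
    · simpa [mul_assoc] using mul _ _ (base g 1) (ih hl')

lemma sigma1Pos_inv_mul_sc (a b : Binf) : sigma1Pos (a⁻¹ * sc a b) :=
  ⟨[b], a⁻¹, by simp, by simp [sc, mul_assoc]⟩

/-- A braid is σ-positive if it is a shifted σ₁-positive braid, that is, if it is positive for the
braid order. -/
def IsSigmaPositive (β : Binf) : Prop :=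
  ∃ (k : ℕ) (γ : Binf), sigma1Pos γ ∧ β = (⇑sh)^[k] γ

lemma sigma1Pos.isSigmaPositive {β : Binf} (hβ : sigma1Pos β) : IsSigmaPositive β :=
  ⟨0, β, hβ, rfl⟩

lemma IsSigmaPositive.shift {β : Binf} : IsSigmaPositive β → IsSigmaPositive (sh β) := by
  rintro ⟨k, γ, hγ, rfl⟩
  exact ⟨k + 1, γ, hγ, (Function.iterate_succ_apply' _ _ _).symm⟩

lemma exists_iterate_sh_sh_eq {k m : ℕ} (hkm : k < m) (g : Binf) :
    ∃ h, sh^[m] g = sh^[k] (sh h) := by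
  obtain ⟨d, rfl⟩ := Nat.exists_eq_add_of_lt hkm
  exact ⟨sh^[d] g, by rw [add_assoc, Function.iterate_add_apply, Function.iterate_succ_apply']⟩

theorem IsSigmaPositive.mul {a b : Binf} (ha : IsSigmaPositive a) (hb : IsSigmaPositive b) :
    IsSigmaPositive (a * b) := by
  obtain ⟨k, γ, hγ, rfl⟩ := ha
  obtain ⟨m, δ, hδ, rfl⟩ := hb
  rcases lt_trichotomy k m with hkm | rfl | hmk
  · obtain ⟨δ', hδ'⟩ := exists_iterate_sh_sh_eq hkm δ
    exact ⟨k, γ * sh δ', hγ.mul_sh δ', by rw [hδ', iterate_map_mul]⟩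
  · exact ⟨k, γ * δ, hγ.mul hδ, (iterate_map_mul sh k γ δ).symm⟩
  · obtain ⟨γ', hγ'⟩ := exists_iterate_sh_sh_eq hmk γ
    exact ⟨m, sh γ' * δ, hδ.sh_mul γ', by rw [hγ', iterate_map_mul]⟩

/-- A braid is σ-definite if it is comparable with `1` in the braid order. -/
def IsSigmaDefinite (β : Binf) : Prop :=
  β = 1 ∨ IsSigmaPositive β ∨ IsSigmaPositive β⁻¹

end Positivity

section SpecialBraids

open Relation

/-- The special braids: the closure of `1` under the self-distributive operation `sc`. -/
def specialBraids : Set Binf := Set.range (LDTerm.eval 1)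

lemma one_mem_specialBraids : 1 ∈ specialBraids := ⟨.x, rfl⟩

lemma sc_mem_specialBraids {a b : Binf} (ha : a ∈ specialBraids) (hb : b ∈ specialBraids) :
    sc a b ∈ specialBraids := by
  obtain ⟨s, rfl⟩ := ha
  obtain ⟨t, rfl⟩ := hb
  exact ⟨.op s t, rfl⟩

lemma eq_or_sigma1Pos_of_onLeftSpine {s t : LDTerm} (h : LDTerm.OnLeftSpine t s) (a : Binf) :
    s.eval a = t.eval a ∨ sigma1Pos ((s.eval a)⁻¹ * t.eval a) := by
  induction h using ReflTransGen.head_induction_on with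
  | refl => exact .inl rfl
  | @head t u htu _ ih =>
    obtain ⟨v, rfl⟩ := htu
    have pos_of_leftFactor : sigma1Pos ((u.eval a)⁻¹ * (LDTerm.op u v).eval a) :=
      sigma1Pos_inv_mul_sc _ _
    refine .inr ?_
    rcases ih with heq | hpos
    · rwa [heq]
    · simpa only [mul_assoc, mul_inv_cancel_left] using hpos.mul pos_of_leftFactor

theorem eq_or_sigma1Pos_of_mem_specialBraids {a b : Binf} (ha : a ∈ specialBraids)
    (hb : b ∈ specialBraids) : a = b ∨ sigma1Pos (a⁻¹ * b) ∨ sigma1Pos (b⁻¹ * a) := by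
  obtain ⟨s, rfl⟩ := ha
  obtain ⟨t, rfl⟩ := hb
  obtain ⟨u, v, hsu, htv, huv⟩ := LDTerm.exists_expands_onLeftSpine s t
  rw [LDTerm.eval_eq_of_expands 1 hsu, LDTerm.eval_eq_of_expands 1 htv]
  rcases huv with h | h
  · rcases eq_or_sigma1Pos_of_onLeftSpine h 1 with heq | hpos
    exacts [.inl heq.symm, .inr (.inr hpos)]
  · rcases eq_or_sigma1Pos_of_onLeftSpine h 1 with heq | hpos
    exacts [.inl heq, .inr (.inl hpos)]

lemma isSigmaDefinite_inv_mul_of_mem_specialBraids {a b g h : Binf} (ha : a ∈ specialBraids)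
    (hb : b ∈ specialBraids) (hgh : IsSigmaDefinite (g⁻¹ * h)) :
    IsSigmaDefinite ((a * sh g)⁻¹ * (b * sh h)) := by
  rcases eq_or_sigma1Pos_of_mem_specialBraids ha hb with rfl | hpos | hpos
  · have shifted : (a * sh g)⁻¹ * (a * sh h) = sh (g⁻¹ * h) := by simp [mul_assoc]
    rw [shifted, IsSigmaDefinite, ← map_inv]
    exact hgh.imp (fun heq => by rw [heq, map_one]) (Or.imp .shift .shift)
  · have pos : sigma1Pos (sh g⁻¹ * (a⁻¹ * b) * sh h) := (hpos.sh_mul _).mul_sh _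
    exact .inr (.inl (by simpa [mul_assoc] using pos.isSigmaPositive))
  · have pos : sigma1Pos (sh h⁻¹ * (b⁻¹ * a) * sh g) := (hpos.sh_mul _).mul_sh _
    exact .inr (.inr (by simpa [mul_assoc] using pos.isSigmaPositive))

/-- The finite products `a₀ * sh (a₁ * sh (a₂ * ⋯))` of shifted special braids. -/
inductive IsSpecialProduct : Binf → Prop
  | one : IsSpecialProduct 1
  | mul_sh {a g : Binf} : a ∈ specialBraids → IsSpecialProduct g → IsSpecialProduct (a * sh g)

lemma IsSpecialProduct.exists_eq_mul_sh {g : Binf} (hg : IsSpecialProduct g) :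
    ∃ a ∈ specialBraids, ∃ g', IsSpecialProduct g' ∧ g = a * sh g' := by
  cases hg with
  | one => exact ⟨1, one_mem_specialBraids, 1, .one, by rw [map_one, one_mul]⟩
  | mul_sh ha hg => exact ⟨_, ha, _, hg, rfl⟩

lemma IsSpecialProduct.mul_σ {g : Binf} (hg : IsSpecialProduct g) (i : ℕ) :
    IsSpecialProduct (g * σ i) := by
  induction i generalizing g with
  | zero =>
    obtain ⟨a, ha, g', hg', rfl⟩ := hg.exists_eq_mul_sh
    obtain ⟨b, hb, r, hr, rfl⟩ := hg'.exists_eq_mul_sh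
    have regroup : a * sh (b * sh r) * σ 0 = sc a b * sh (a * sh r) := by
      simp only [sc, map_mul, mul_assoc, inv_mul_cancel_left, (σ_zero_commute_sh_sh r).eq]
    rw [regroup]
    exact .mul_sh (sc_mem_specialBraids ha hb) (.mul_sh ha hr)
  | succ i ih =>
    obtain ⟨a, ha, g', hg', rfl⟩ := hg.exists_eq_mul_sh
    rw [mul_assoc, ← sh_σ, ← map_mul]
    exact .mul_sh ha (ih hg')

theorem IsSpecialProduct.isSigmaDefinite_inv_mul {g h : Binf} (hg : IsSpecialProduct g)
    (hh : IsSpecialProduct h) : IsSigmaDefinite (g⁻¹ * h) := by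
  induction hg generalizing h with
  | one =>
    induction hh with
    | one => exact .inl (inv_mul_cancel 1)
    | mul_sh hb _ ih =>
      simpa only [map_one, mul_one] using
        isSigmaDefinite_inv_mul_of_mem_specialBraids one_mem_specialBraids hb ih
  | mul_sh ha _ ih =>
    obtain ⟨b, hb, h', hh', rfl⟩ := hh.exists_eq_mul_sh
    exact isSigmaDefinite_inv_mul_of_mem_specialBraids ha hb (ih hh')

end SpecialBraids

section Fractions

open Filter

/-- The braid `σ₀σ₁⋯σₙ₋₁`, in which the first of `n + 1` strands crosses all the others. -/
def cycleBraid : ℕ → Binf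
  | 0 => 1
  | n + 1 => cycleBraid n * σ n

lemma cycleBraid_commute_σ {n j : ℕ} (h : n < j) : Commute (cycleBraid n) (σ j) := by
  induction n with
  | zero => exact .one_left _
  | succ n ih => exact (ih (by lia)).mul_left (σ_commute (by lia))

lemma cycleBraid_succ_eq_σ_zero_mul_sh (n : ℕ) :
    cycleBraid (n + 1) = σ 0 * sh (cycleBraid n) := by
  induction n with
  | zero => simp only [cycleBraid, map_one, one_mul, mul_one]
  | succ n ih =>
    calc
      cycleBraid (n + 1) * σ (n + 1) = σ 0 * (sh (cycleBraid n) * σ (n + 1)) := by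
        rw [ih, mul_assoc]
      _ = σ 0 * sh (cycleBraid n * σ n) := by rw [map_mul, sh_σ]

lemma cycleBraid_semiconjBy_σ {n i : ℕ} (h : i + 1 < n) :
    SemiconjBy (cycleBraid n) (σ i) (σ (i + 1)) := by
  induction n with
  | zero => lia
  | succ n ih =>
    rcases (Nat.le_of_lt_succ h).lt_or_eq with hin | rfl
    · exact (ih hin).mul_left (σ_commute (by lia) : Commute (σ i) (σ n)).symm
    · have commute : Commute (cycleBraid i) (σ (i + 1)) := cycleBraid_commute_σ (by lia)
      calc
        cycleBraid i * σ i * σ (i + 1) * σ i = cycleBraid i * (σ i * σ (i + 1) * σ i) := by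
          simp only [mul_assoc]
        _ = cycleBraid i * σ (i + 1) * (σ i * σ (i + 1)) := by
          rw [σ_braid]
          simp only [mul_assoc]
        _ = σ (i + 1) * (cycleBraid i * σ i * σ (i + 1)) := by
          rw [commute.eq]
          simp only [mul_assoc]

lemma cycleBraid_pow_semiconjBy_σ {n i k : ℕ} (h : i + k < n) :
    SemiconjBy (cycleBraid n ^ k) (σ i) (σ (i + k)) := by
  induction k with
  | zero => simp
  | succ k ih =>
    rw [pow_succ']
    exact (cycleBraid_semiconjBy_σ h).mul_left (ih (by lia))

lemma cycleBraid_semiconjBy_cycleBraid {n k : ℕ} (h : k < n) :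
    SemiconjBy (cycleBraid n) (cycleBraid k) (sh (cycleBraid k)) := by
  induction k with
  | zero => simp [cycleBraid]
  | succ k ih =>
    rw [cycleBraid, map_mul, sh_σ]
    exact (ih (by lia)).mul_right (cycleBraid_semiconjBy_σ h)

lemma cycleBraid_sq_semiconjBy_σ (m : ℕ) :
    SemiconjBy (cycleBraid (m + 1) ^ 2) (σ m) (σ 0) := by
  calc
    cycleBraid (m + 1) ^ 2 * σ m
        = σ 0 * (sh (cycleBraid m) * cycleBraid (m + 1)) * σ m := by
      rw [sq, ← mul_assoc (σ 0), ← cycleBraid_succ_eq_σ_zero_mul_sh]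
    _ = σ 0 * (cycleBraid (m + 1) * (cycleBraid m * σ m)) := by
      rw [← (cycleBraid_semiconjBy_cycleBraid m.lt_succ_self).eq]
      simp only [mul_assoc]
    _ = σ 0 * cycleBraid (m + 1) ^ 2 := by rw [sq, cycleBraid]

/-- The full twist on `n + 1` strands, the square of Garside's half twist. -/
def fullTwist (n : ℕ) : Binf := cycleBraid n ^ (n + 1)

lemma fullTwist_add_add_one (i k : ℕ) : fullTwist (i + k + 1) =
    cycleBraid (i + k + 1) ^ i * cycleBraid (i + k + 1) ^ 2 * cycleBraid (i + k + 1) ^ k := by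
  rw [fullTwist, ← pow_add, ← pow_add]
  congr 1
  lia

lemma fullTwist_commute_σ {n i : ℕ} (h : i < n) : Commute (fullTwist n) (σ i) := by
  obtain ⟨k, rfl⟩ := Nat.exists_eq_add_of_lt h
  have from_zero : SemiconjBy (cycleBraid (i + k + 1) ^ i) (σ 0) (σ i) := by
    simpa only [zero_add] using cycleBraid_pow_semiconjBy_σ (i := 0) (by lia)
  rw [fullTwist_add_add_one]
  exact (from_zero.mul_left (cycleBraid_sq_semiconjBy_σ _)).mul_left
    (cycleBraid_pow_semiconjBy_σ (by lia))

/-- The monoid of positive braids, generated by the `σ i`. -/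
def positiveBraids : Submonoid Binf := Submonoid.closure (Set.range σ)

lemma σ_mem_positiveBraids (i : ℕ) : σ i ∈ positiveBraids :=
  Submonoid.subset_closure (Set.mem_range_self i)

lemma cycleBraid_mem_positiveBraids (n : ℕ) : cycleBraid n ∈ positiveBraids := by
  induction n with
  | zero => exact one_mem _
  | succ n ih => exact mul_mem ih (σ_mem_positiveBraids n)

lemma fullTwist_mem_positiveBraids (n : ℕ) : fullTwist n ∈ positiveBraids :=
  pow_mem (cycleBraid_mem_positiveBraids n) _

lemma fullTwist_mul_σ_inv_mem_positiveBraids {n i : ℕ} (h : i < n) :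
    fullTwist n * (σ i)⁻¹ ∈ positiveBraids := by
  obtain ⟨k, rfl⟩ := Nat.exists_eq_add_of_lt h
  have from_i : SemiconjBy (cycleBraid (i + k + 1) ^ k) (σ i)⁻¹ (σ (i + k))⁻¹ :=
    (cycleBraid_pow_semiconjBy_σ (by lia)).inv_right
  have cancel_last : cycleBraid (i + k + 1) * (σ (i + k))⁻¹ = cycleBraid (i + k) :=
    mul_inv_cancel_right _ _
  have twist_eq : fullTwist (i + k + 1) * (σ i)⁻¹ = cycleBraid (i + k + 1) ^ i *
      (cycleBraid (i + k + 1) * cycleBraid (i + k)) * cycleBraid (i + k + 1) ^ k := by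
    rw [fullTwist_add_add_one, mul_assoc, from_i.eq, ← cancel_last]
    simp only [sq, mul_assoc]
  have hmem := cycleBraid_mem_positiveBraids
  rw [twist_eq]
  exact mul_mem (mul_mem (pow_mem (hmem _) _) (mul_mem (hmem _) (hmem _))) (pow_mem (hmem _) _)

lemma eventually_fullTwist_commute {q : Binf} (hq : q ∈ positiveBraids) :
    ∀ᶠ n in atTop, Commute (fullTwist n) q := by
  induction hq using Submonoid.closure_induction with
  | mem _ hσ =>
    obtain ⟨i, rfl⟩ := hσ
    filter_upwards [eventually_gt_atTop i] with n hn using fullTwist_commute_σ hn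
  | one => exact .of_forall fun _ => .one_right _
  | mul a b _ _ iha ihb => filter_upwards [iha, ihb] with n ha hb using ha.mul_right hb

theorem exists_positiveBraids_mul_mem (g : Binf) :
    ∃ p ∈ positiveBraids, p * g ∈ positiveBraids := by
  have hg : g ∈ Subgroup.closure (Set.range σ) := closure_range_σ ▸ Subgroup.mem_top g
  induction hg using Subgroup.closure_induction_right with
  | one => exact ⟨1, one_mem _, by simp⟩
  | mul_right g _ _ hσ ih =>
    obtain ⟨i, rfl⟩ := hσ
    obtain ⟨p, hp, hpg⟩ := ih
    exact ⟨p, hp, by simpa only [mul_assoc] using mul_mem hpg (σ_mem_positiveBraids i)⟩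
  | mul_inv_cancel g _ _ hσ ih =>
    obtain ⟨i, rfl⟩ := hσ
    obtain ⟨p, hp, hpg⟩ := ih
    obtain ⟨n, hcomm, hin⟩ :=
      ((eventually_fullTwist_commute hpg).and (eventually_gt_atTop i)).exists
    have clear_inverse : fullTwist n * p * (g * (σ i)⁻¹) = p * g * (fullTwist n * (σ i)⁻¹) := by
      rw [← mul_assoc (p * g), ← hcomm.eq]
      simp only [mul_assoc]
    refine ⟨fullTwist n * p, mul_mem (fullTwist_mem_positiveBraids n) hp, ?_⟩
    rw [clear_inverse]
    exact mul_mem hpg (fullTwist_mul_σ_inv_mem_positiveBraids hin)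

lemma IsSpecialProduct.of_mem_positiveBraids {g : Binf} (hg : g ∈ positiveBraids) :
    IsSpecialProduct g := by
  induction hg using Submonoid.closure_induction_right with
  | one => exact .one
  | mul_right _ _ _ hσ ih =>
    obtain ⟨i, rfl⟩ := hσ
    exact ih.mul_σ i

theorem isSigmaDefinite (β : Binf) : IsSigmaDefinite β := by
  obtain ⟨p, hp, hpβ⟩ := exists_positiveBraids_mul_mem β
  simpa only [inv_mul_cancel_left] using
    (IsSpecialProduct.of_mem_positiveBraids hp).isSigmaDefinite_inv_mul
      (IsSpecialProduct.of_mem_positiveBraids hpβ)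

end Fractions

section HalfTrees

variable {α : Type*}

/-- The set `T` is the half-tree of the Cayley tree of `FreeGroup α` consisting of the reduced words
that begin with the generator `k`: it does not contain `1`, and the only edge of the tree that
enters it is the one from `1` to `k`. -/
structure IsHalfTree (k : α) (T : Set (FreeGroup α)) : Prop where
  one_notMem : 1 ∉ T
  mul_of_mem_iff (w : FreeGroup α) (j : α) : w * .of j ∈ T ↔ w ∈ T ∨ (w = 1 ∧ j = k)

namespace IsHalfTree

variable {k j : α} {T S : Set (FreeGroup α)} {w : FreeGroup α}

lemma ne_one (hT : IsHalfTree k T) (hw : w ∈ T) : w ≠ 1 :=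
  ne_of_mem_of_not_mem hw hT.one_notMem

lemma of_mem_iff (hT : IsHalfTree k T) : .of j ∈ T ↔ j = k := by
  simpa [hT.one_notMem] using hT.mul_of_mem_iff 1 j

lemma mul_of_mem_iff_of_ne_one (hT : IsHalfTree k T) (hw : w ≠ 1) : w * .of j ∈ T ↔ w ∈ T := by
  simp [hT.mul_of_mem_iff, hw]

lemma mul_of_mem_iff_of_ne (hT : IsHalfTree k T) (hj : j ≠ k) : w * .of j ∈ T ↔ w ∈ T := by
  simp [hT.mul_of_mem_iff, hj]

lemma mul_of_inv_mem_iff_of_ne_one (hT : IsHalfTree k T) (hw : w * (.of j)⁻¹ ≠ 1) :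
    w * (.of j)⁻¹ ∈ T ↔ w ∈ T := by
  rw [← hT.mul_of_mem_iff_of_ne_one hw, inv_mul_cancel_right]

lemma mul_of_inv_mem_iff_of_ne (hT : IsHalfTree k T) (hj : j ≠ k) :
    w * (.of j)⁻¹ ∈ T ↔ w ∈ T := by
  rw [← hT.mul_of_mem_iff_of_ne hj, inv_mul_cancel_right]

/-- A half-tree is connected, hence contained in any set whose membership is constant along the
edges that avoid `1`. -/
theorem subset (hT : IsHalfTree k T)
    (hS : ∀ w j, w ≠ 1 → w * .of j ≠ 1 → (w * .of j ∈ S ↔ w ∈ S)) (hk : .of k ∈ S) : T ⊆ S := by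
  intro w
  have hw : w ∈ Subgroup.closure (Set.range FreeGroup.of) :=
    FreeGroup.closure_range_of α ▸ Subgroup.mem_top w
  induction hw using Subgroup.closure_induction_right with
  | one => exact fun h => absurd h hT.one_notMem
  | mul_right u _ _ hj ih =>
    obtain ⟨j, rfl⟩ := hj
    intro hT'
    rcases eq_or_ne u 1 with rfl | hu
    · rw [one_mul] at hT' ⊢
      rwa [hT.of_mem_iff.mp hT']
    · exact (hS u j hu (hT.ne_one hT')).mpr (ih ((hT.mul_of_mem_iff_of_ne_one hu).mp hT'))
  | mul_inv_cancel u _ _ hj ih =>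
    obtain ⟨j, rfl⟩ := hj
    intro hT'
    have u_mem : u ∈ T := (hT.mul_of_inv_mem_iff_of_ne_one (hT.ne_one hT')).mp hT'
    have edge := hS (u * (.of j)⁻¹) j (hT.ne_one hT') (by simpa using hT.ne_one u_mem)
    rw [inv_mul_cancel_right] at edge
    exact edge.mp (ih u_mem)

theorem unique (hT : IsHalfTree k T) (hS : IsHalfTree k S) : T = S :=
  (hT.subset (fun _ _ hw _ => hS.mul_of_mem_iff_of_ne_one hw) (hS.of_mem_iff.mpr rfl)).antisymm
    (hS.subset (fun _ _ hw _ => hT.mul_of_mem_iff_of_ne_one hw) (hT.of_mem_iff.mpr rfl))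

end IsHalfTree

lemma toWord_mul_of_eq_or_toWord_eq [DecidableEq α] (w : FreeGroup α) (j : α) :
    (w * .of j).toWord = w.toWord ++ [(j, true)] ∨
      w.toWord = (w * .of j).toWord ++ [(j, false)] := by
  have reduced : FreeGroup.IsReduced w.toWord := FreeGroup.isReduced_toWord
  rcases w.toWord.eq_nil_or_concat' with hnil | ⟨L, a, hL⟩
  · left
    rw [FreeGroup.toWord_eq_nil_iff.mp hnil, one_mul, FreeGroup.toWord_of, FreeGroup.toWord_one,
      List.nil_append]
  rw [hL] at reduced ⊢
  by_cases ha : a = (j, false)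
  · right
    have w_eq : w = FreeGroup.mk L * (FreeGroup.of j)⁻¹ := by
      rw [← FreeGroup.mk_toWord (x := w), hL, ha]
      rfl
    have reduced_L : FreeGroup.IsReduced L := reduced.infix (List.prefix_append L [a]).isInfix
    rw [w_eq, inv_mul_cancel_right, FreeGroup.toWord_mk, reduced_L.reduce_eq, ha]
  · left
    have no_cancel : FreeGroup.IsReduced [a, (j, true)] := by
      refine FreeGroup.isReduced_cons_cons.mpr ⟨fun h => ?_, .singleton⟩
      exact Bool.eq_true_of_not_eq_false fun h' => ha (Prod.ext h h')
    rw [FreeGroup.toWord_mul, hL, FreeGroup.toWord_of]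
    exact (reduced.append_overlap no_cancel (List.cons_ne_nil _ _)).reduce_eq

theorem exists_isHalfTree (k : α) : ∃ T, IsHalfTree k T := by
  classical
  refine ⟨{w | w.toWord.head? = some (k, true)}, by simp, fun w j => ?_⟩
  simp only [Set.mem_ofPred_eq, ← FreeGroup.toWord_eq_nil_iff]
  rcases toWord_mul_of_eq_or_toWord_eq w j with h | h
  · rw [h]
    cases w.toWord <;> simp
  · rw [h]
    cases (w * .of j).toWord <;> simp

end HalfTrees

section ArtinRepresentation

open Pointwise

lemma mulAut_freeGroup_ext {α : Type*} {φ ψ : MulAut (FreeGroup α)}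
    (h : ∀ j, φ (.of j) = ψ (.of j)) : φ = ψ :=
  MulEquiv.toMonoidHom_injective (FreeGroup.ext_hom _ _ h)

/-- The image of the generator `j` under the automorphism `artinAut i`. -/
def artinAutOf (i j : ℕ) : FreeGroup ℕ :=
  if j = i then .of i * .of (i + 1) * (.of i)⁻¹ else if j = i + 1 then .of i else .of j

/-- The image of the generator `j` under the inverse of the automorphism `artinAut i`. -/
def artinAutInvOf (i j : ℕ) : FreeGroup ℕ :=
  if j = i then .of (i + 1)
  else if j = i + 1 then (.of (i + 1))⁻¹ * .of i * .of (i + 1) else .of j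

/-- Artin's automorphism `x_i ↦ x_i * x_{i+1} * x_i⁻¹`, `x_{i+1} ↦ x_i` of the free group, which
fixes all other generators. -/
def artinAut (i : ℕ) : MulAut (FreeGroup ℕ) :=
  MonoidHom.toMulEquiv (FreeGroup.lift (artinAutOf i)) (FreeGroup.lift (artinAutInvOf i))
    (by
      ext j
      by_cases j = i <;> by_cases j = i + 1 <;> simp_all [artinAutOf, artinAutInvOf, mul_assoc])
    (by
      ext j
      by_cases j = i <;> by_cases j = i + 1 <;> simp_all [artinAutOf, artinAutInvOf, mul_assoc])

lemma artinAut_apply_of (i j : ℕ) : artinAut i (.of j) = artinAutOf i j :=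
  FreeGroup.lift_apply_of

lemma artinAut_of_self (i : ℕ) : artinAut i (.of i) = .of i * .of (i + 1) * (.of i)⁻¹ := by
  simp [artinAut_apply_of, artinAutOf]

lemma artinAut_of_succ (i : ℕ) : artinAut i (.of (i + 1)) = .of i := by
  simp [artinAut_apply_of, artinAutOf]

lemma artinAut_of_of_ne {i j : ℕ} (h : j ≠ i) (h' : j ≠ i + 1) : artinAut i (.of j) = .of j := by
  simp [artinAut_apply_of, artinAutOf, h, h']

lemma artinAut_commute {i j : ℕ} (h : i + 2 ≤ j) : Commute (artinAut i) (artinAut j) := by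
  refine mulAut_freeGroup_ext fun k => ?_
  simp only [MulAut.mul_apply]
  have hi : artinAut j (.of i) = .of i := artinAut_of_of_ne (by lia) (by lia)
  have hi' : artinAut j (.of (i + 1)) = .of (i + 1) := artinAut_of_of_ne (by lia) (by lia)
  have hj : artinAut i (.of j) = .of j := artinAut_of_of_ne (by lia) (by lia)
  have hj' : artinAut i (.of (j + 1)) = .of (j + 1) := artinAut_of_of_ne (by lia) (by lia)
  by_cases hki : k = i ∨ k = i + 1
  · rcases hki with rfl | rfl <;>
      simp only [artinAut_of_self, artinAut_of_succ, map_mul, map_inv, hi, hi']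
  by_cases hkj : k = j ∨ k = j + 1
  · rcases hkj with rfl | rfl <;>
      simp only [artinAut_of_self, artinAut_of_succ, map_mul, map_inv, hj, hj']
  push Not at hki hkj
  rw [artinAut_of_of_ne hki.1 hki.2, artinAut_of_of_ne hkj.1 hkj.2, artinAut_of_of_ne hki.1 hki.2]

lemma artinAut_braid (i : ℕ) :
    artinAut i * artinAut (i + 1) * artinAut i =
      artinAut (i + 1) * artinAut i * artinAut (i + 1) := by
  refine mulAut_freeGroup_ext fun k => ?_
  simp only [MulAut.mul_apply]
  have hi : artinAut (i + 1) (.of i) = .of i := artinAut_of_of_ne (by lia) (by lia)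
  have hi' : artinAut i (.of (i + 1 + 1)) = .of (i + 1 + 1) :=
    artinAut_of_of_ne (by lia) (by lia)
  by_cases hk : k = i ∨ k = i + 1 ∨ k = i + 1 + 1
  · rcases hk with rfl | rfl | rfl <;>
      simp [artinAut_of_self, artinAut_of_succ, hi, hi', mul_assoc]
  push Not at hk
  simp only [artinAut_of_of_ne hk.1 hk.2.1, artinAut_of_of_ne hk.2.1 hk.2.2]

lemma lift_artinAut_eq_one : ∀ r ∈ braidRels, FreeGroup.lift artinAut r = 1 := by
  rintro _ (⟨i, j, hij, rfl⟩ | ⟨i, rfl⟩)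
  · simp only [map_mul, map_inv, FreeGroup.lift_apply_of]
    rw [(artinAut_commute hij).eq, mul_inv_cancel_right, mul_inv_cancel]
  · simp only [map_mul, map_inv, FreeGroup.lift_apply_of, artinAut_braid, mul_inv_cancel]

/-- Artin's representation of the braid group by automorphisms of a free group. -/
def artinHom : Binf →* MulAut (FreeGroup ℕ) := PresentedGroup.toGroup lift_artinAut_eq_one

lemma artinHom_σ (i : ℕ) : artinHom (σ i) = artinAut i :=
  PresentedGroup.toGroup.of lift_artinAut_eq_one

variable {k i : ℕ} {T : Set (FreeGroup ℕ)}

lemma IsHalfTree.preimage_artinAut (hT : IsHalfTree k T) (hki : k < i) :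
    IsHalfTree k (artinAut i ⁻¹' T) where
  one_notMem := by simpa using hT.one_notMem
  mul_of_mem_iff w j := by
    have hi : i ≠ k := hki.ne'
    have hi' : i + 1 ≠ k := by lia
    simp only [Set.mem_preimage, map_mul]
    by_cases hji : j = i
    · subst hji
      rw [artinAut_of_self, ← mul_assoc, ← mul_assoc, hT.mul_of_inv_mem_iff_of_ne hi,
        hT.mul_of_mem_iff_of_ne hi', hT.mul_of_mem_iff_of_ne hi]
      simp [hi]
    by_cases hji' : j = i + 1
    · subst hji'
      rw [artinAut_of_succ, hT.mul_of_mem_iff_of_ne hi]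
      simp [hi']
    · rw [artinAut_of_of_ne hji hji', hT.mul_of_mem_iff, map_eq_one_iff _ (artinAut i).injective]

lemma IsHalfTree.artinAut_smul (hT : IsHalfTree k T) (hki : k < i) : artinAut i • T = T := by
  conv_lhs => rw [hT.unique (hT.preimage_artinAut hki)]
  exact Set.image_preimage_eq T (artinAut i).surjective

lemma IsHalfTree.subset_preimage_artinAut_self (hT : IsHalfTree k T) : T ⊆ artinAut k ⁻¹' T := by
  have image_ne_one {w : FreeGroup ℕ} (hw : w ≠ 1) : artinAut k w ≠ 1 :=
    (map_ne_one_iff _ (artinAut k).injective).mpr hw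
  refine hT.subset (fun w j hw hwj => ?edge) ?start
  case edge =>
    have image_mul_ne_one := image_ne_one hwj
    simp only [Set.mem_preimage, map_mul] at image_mul_ne_one ⊢
    by_cases hjk : j = k
    · subst hjk
      rw [artinAut_of_self, ← mul_assoc, ← mul_assoc] at image_mul_ne_one ⊢
      rw [hT.mul_of_inv_mem_iff_of_ne_one image_mul_ne_one, hT.mul_of_mem_iff_of_ne (by simp),
        hT.mul_of_mem_iff_of_ne_one (image_ne_one hw)]
    by_cases hjk' : j = k + 1
    · rw [hjk', artinAut_of_succ, hT.mul_of_mem_iff_of_ne_one (image_ne_one hw)]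
    · rw [artinAut_of_of_ne hjk hjk', hT.mul_of_mem_iff_of_ne_one (image_ne_one hw)]
  case start =>
    have image_of_ne_one := image_ne_one (FreeGroup.of_ne_one k)
    rw [artinAut_of_self] at image_of_ne_one
    rw [Set.mem_preimage, artinAut_of_self, hT.mul_of_inv_mem_iff_of_ne_one image_of_ne_one,
      hT.mul_of_mem_iff_of_ne (by simp), hT.of_mem_iff]

lemma IsHalfTree.artinAut_self_smul_ssubset (hT : IsHalfTree k T) : artinAut k • T ⊂ T := by
  refine ⟨Set.image_subset_iff.mpr hT.subset_preimage_artinAut_self, fun superset => ?_⟩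
  have of_mem_smul : artinAut k • FreeGroup.of (k + 1) ∈ artinAut k • T := by
    rw [MulAut.smul_def, artinAut_of_succ]
    exact superset (hT.of_mem_iff.mpr rfl)
  exact k.succ_ne_self (hT.of_mem_iff.mp (Set.smul_mem_smul_set_iff.mp of_mem_smul))

lemma IsHalfTree.artinHom_iterate_sh_smul (hT : IsHalfTree k T) (g : Binf) :
    artinHom (sh^[k + 1] g) • T = T := by
  have hg : g ∈ Subgroup.closure (Set.range σ) := closure_range_σ ▸ Subgroup.mem_top g
  induction hg using Subgroup.closure_induction with
  | mem _ hσ =>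
    obtain ⟨i, rfl⟩ := hσ
    rw [iterate_sh_σ, artinHom_σ]
    exact hT.artinAut_smul (by lia)
  | one => rw [iterate_map_one, map_one, one_smul]
  | mul a b _ _ iha ihb => rw [iterate_map_mul, map_mul, mul_smul, ihb, iha]
  | inv a _ iha => rw [iterate_map_inv, map_inv, inv_smul_eq_iff, iha]

theorem IsHalfTree.artinHom_smul_ssubset (hT : IsHalfTree k T) {γ : Binf} (hγ : sigma1Pos γ) :
    artinHom (sh^[k] γ) • T ⊂ T := by
  refine hγ.induction_on (fun g h => ?base) fun a b iha ihb => ?mul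
  case base =>
    have image_eq : artinHom (sh^[k] (sh g * σ 0 * sh h)) • T =
        artinHom (sh^[k + 1] g) • artinAut k • T := by
      rw [iterate_map_mul, iterate_map_mul, ← Function.iterate_succ_apply,
        ← Function.iterate_succ_apply, iterate_sh_σ, zero_add, map_mul, map_mul, mul_smul, mul_smul,
        hT.artinHom_iterate_sh_smul, artinHom_σ]
    rw [image_eq]
    conv_rhs => rw [← hT.artinHom_iterate_sh_smul g]
    exact (MulEquiv.injective _).image_strictMono hT.artinAut_self_smul_ssubset
  case mul =>
    rw [iterate_map_mul, map_mul, mul_smul]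
    exact (Set.smul_set_mono ihb.subset).trans_ssubset iha

theorem not_isSigmaPositive_one : ¬ IsSigmaPositive 1 := by
  rintro ⟨k, γ, hγ, h⟩
  obtain ⟨T, hT⟩ := exists_isHalfTree k
  have ssubset := hT.artinHom_smul_ssubset hγ
  rw [← h, map_one, one_smul] at ssubset
  exact ssubset.ne rfl

end ArtinRepresentation

/-- the braid order `<` is a strict linear order on `Binf`,
compatible with multiplication on the left. -/
theorem braid_order :
    (∀ β : Binf, ¬ blt β β) ∧
    (∀ β₁ β₂ β₃ : Binf, blt β₁ β₂ → blt β₂ β₃ → blt β₁ β₃) ∧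
    (∀ β₁ β₂ : Binf, β₁ ≠ β₂ → blt β₁ β₂ ∨ blt β₂ β₁) ∧
    (∀ γ β₁ β₂ : Binf, blt β₁ β₂ → blt (γ * β₁) (γ * β₂)) := by
  have blt_iff (a b : Binf) : blt a b ↔ IsSigmaPositive (a⁻¹ * b) := .rfl
  simp only [blt_iff]
  refine ⟨fun β => ?irrefl, fun β₁ β₂ β₃ h₁₂ h₂₃ => ?trans, fun β₁ β₂ hne => ?total,
    fun γ β₁ β₂ h => ?mul_left⟩
  case irrefl => simpa only [inv_mul_cancel] using not_isSigmaPositive_one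
  case trans => simpa only [mul_assoc, mul_inv_cancel_left] using h₁₂.mul h₂₃
  case total =>
    rcases isSigmaDefinite (β₁⁻¹ * β₂) with heq | hpos
    · exact absurd (inv_mul_eq_one.mp heq) hne
    · simpa only [mul_inv_rev, inv_inv] using hpos
  case mul_left => simpa only [mul_inv_rev, mul_assoc, inv_mul_cancel_left] using h
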